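/- For all integers r ≥ 0 and m, ℓ with 0 ≤ m ≤ ℓ ≤ r + 1 there exists a constant C > 0, depending only on r, ℓ and m, with the following property: for all real numbers a < b, every ℓ-times continuously differentiable function ψ : [a,b] → ℝ, and every real polynomial q of degree at most r satisfying ∫_a^b (ψ(t) − q(t))·p(t) dt = 0 for every real polynomial p of degree at most r, one has ‖(ψ − q)^{(m)}‖_{L²(a,b)} ≤ C (b−a)^{ℓ−m} ‖ψ^{(ℓ)}‖_{L²(a,b)}, where the superscripts denote derivatives of the indicated order. -/

import Mathlib

open Polynomial Set MeasureTheory intervalIntegral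

/-- Inverse inequality on the unit interval: on polynomials of degree at most `r`, differentiation
is bounded in `L²(0,1)`. -/
lemma exists_integral_derivative_sq_le_unit (r : ℕ) :
    ∃ K : ℝ, 0 ≤ K ∧ ∀ p : ℝ[X], p.natDegree ≤ r →
      ∫ t in (0 : ℝ)..1, (p.derivative.eval t) ^ 2 ≤ K * ∫ t in (0 : ℝ)..1, (p.eval t) ^ 2 := by
  let P : (Fin (r + 1) → ℝ) → ℝ[X] := fun c ↦ ∑ i : Fin (r + 1), C (c i) * X ^ (i : ℕ)
  have hcoeff : ∀ c (i : Fin (r + 1)), (P c).coeff i = c i := by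
    intro c i
    simp [P, coeff_C_mul, coeff_X_pow, Fin.val_inj]
  have hsmul : ∀ (x : ℝ) c, P (x • c) = C x * P c := by
    intro x c
    simp [P, Finset.mul_sum, mul_assoc]
  have hP : ∀ p : ℝ[X], p.natDegree ≤ r → P (fun i ↦ p.coeff i) = p := by
    intro p hp
    conv_rhs => rw [p.as_sum_range_C_mul_X_pow' (Nat.lt_succ_of_le hp), Finset.sum_range]
  let F : (Fin (r + 1) → ℝ) → ℝ := fun c ↦ ∫ t in (0 : ℝ)..1, ((P c).eval t) ^ 2
  let G : (Fin (r + 1) → ℝ) → ℝ := fun c ↦ ∫ t in (0 : ℝ)..1, ((P c).derivative.eval t) ^ 2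
  have hF : Continuous F := by
    apply continuous_parametric_intervalIntegral_of_continuous'
    simp only [P, Function.uncurry_def, eval_finsetSum, eval_mul, eval_C, eval_pow, eval_X]
    fun_prop
  have hG : Continuous G := by
    apply continuous_parametric_intervalIntegral_of_continuous'
    simp only [P, Function.uncurry_def, derivative_sum, derivative_C_mul_X_pow, eval_finsetSum,
      eval_mul, eval_C, eval_pow, eval_X]
    fun_prop
  have hFpos : ∀ c, c ≠ 0 → 0 < F c := by
    intro c hc
    have hne : P c ≠ 0 := by
      intro h
      apply hc
      ext i
      rw [← hcoeff c i, h]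
      simp
    refine intervalIntegral.integral_pos zero_lt_one (by fun_prop) (fun _ _ ↦ sq_nonneg _) ?_
    by_contra! h
    refine hne (eq_zero_of_infinite_isRoot _ ((Icc_infinite (zero_lt_one' ℝ)).mono ?_))
    intro x hx
    exact pow_eq_zero_iff two_ne_zero |>.1 (le_antisymm (h x hx) (sq_nonneg _))
  obtain ⟨K, hK⟩ := (isCompact_sphere (0 : Fin (r + 1) → ℝ) 1).exists_bound_of_continuousOn
    (f := fun c ↦ G c / F c) (hG.continuousOn.div hF.continuousOn
      fun c hc ↦ (hFpos c (ne_zero_of_mem_unit_sphere ⟨c, hc⟩)).ne')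
  refine ⟨|K|, abs_nonneg K, fun p hp ↦ ?_⟩
  obtain ⟨c, rfl⟩ : ∃ c, P c = p := ⟨_, hP p hp⟩
  rcases eq_or_ne c 0 with rfl | hc
  · simp [P]
  have hn : ‖c‖ ≠ 0 := norm_ne_zero_iff.2 hc
  obtain ⟨u, hu, hcu⟩ : ∃ u : Fin (r + 1) → ℝ, ‖u‖ = 1 ∧ c = ‖c‖ • u :=
    ⟨‖c‖⁻¹ • c, by simp [norm_smul, hn], by rw [smul_smul, mul_inv_cancel₀ hn, one_smul]⟩
  have hGu : G u ≤ |K| * F u := by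
    have hu0 : u ≠ 0 := by
      rintro rfl
      simp at hu
    rw [← div_le_iff₀ (hFpos u hu0)]
    exact (le_abs_self _).trans ((hK u (by simpa using hu)).trans (le_abs_self K))
  rw [hcu, hsmul]
  simp only [derivative_C_mul, eval_mul, eval_C, mul_pow, intervalIntegral.integral_const_mul]
  calc ‖c‖ ^ 2 * G u ≤ ‖c‖ ^ 2 * (|K| * F u) := by gcongr
    _ = _ := by ring

/-- Scaled inverse inequality on an arbitrary interval. -/
lemma exists_integral_derivative_sq_le (r : ℕ) :
    ∃ K : ℝ, 0 ≤ K ∧ ∀ a b : ℝ, a < b → ∀ p : ℝ[X], p.natDegree ≤ r →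
      (b - a) ^ 2 * ∫ t in a..b, (p.derivative.eval t) ^ 2 ≤ K * ∫ t in a..b, (p.eval t) ^ 2 := by
  obtain ⟨K, hK, h⟩ := exists_integral_derivative_sq_le_unit r
  refine ⟨K, hK, fun a b hab p hp ↦ ?_⟩
  have hba : 0 < b - a := sub_pos.2 hab
  have hscale : ∀ s : ℝ[X], ∫ t in (0 : ℝ)..1, (s.eval ((b - a) * t + a)) ^ 2 =
      (b - a)⁻¹ * ∫ t in a..b, (s.eval t) ^ 2 := by
    intro s
    rw [integral_comp_mul_add (fun t ↦ (s.eval t) ^ 2) hba.ne' a]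
    simp
  have hdeg : (p.comp (C (b - a) * X + C a)).natDegree ≤ r := by
    rw [natDegree_comp, natDegree_linear hba.ne', mul_one]
    exact hp
  have := h _ hdeg
  simp only [derivative_comp, derivative_add, derivative_C_mul, derivative_X, derivative_C,
    eval_mul, eval_comp, eval_add, eval_C, eval_X, mul_pow, mul_one, add_zero,
    intervalIntegral.integral_const_mul, hscale] at this
  rw [mul_left_comm, mul_left_comm K] at this
  exact le_of_mul_le_mul_left this (inv_pos.2 hba)

/-- Scaled inverse inequality for higher derivatives. -/
lemma exists_integral_iterate_derivative_sq_le (r m : ℕ) :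
    ∃ K : ℝ, 0 ≤ K ∧ ∀ a b : ℝ, a < b → ∀ p : ℝ[X], p.natDegree ≤ r →
      (b - a) ^ (2 * m) * ∫ t in a..b, ((derivative^[m] p).eval t) ^ 2 ≤
        K * ∫ t in a..b, (p.eval t) ^ 2 := by
  obtain ⟨K, hK, h⟩ := exists_integral_derivative_sq_le r
  refine ⟨K ^ m, by positivity, fun a b hab p hp ↦ ?_⟩
  have hba : 0 < b - a := sub_pos.2 hab
  induction m with
  | zero => simp
  | succ m ih =>
    have hdeg : (derivative^[m] p).natDegree ≤ r :=
      (natDegree_iterate_derivative p m).trans ((Nat.sub_le _ _).trans hp)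
    have hstep := h a b hab _ hdeg
    rw [Function.iterate_succ_apply']
    calc _ = (b - a) ^ (2 * m) * ((b - a) ^ 2 *
          ∫ t in a..b, ((derivative (derivative^[m] p)).eval t) ^ 2) := by ring
      _ ≤ (b - a) ^ (2 * m) * (K * ∫ t in a..b, ((derivative^[m] p).eval t) ^ 2) := by gcongr
      _ = K * ((b - a) ^ (2 * m) * ∫ t in a..b, ((derivative^[m] p).eval t) ^ 2) := by ring
      _ ≤ K * (K ^ m * ∫ t in a..b, (p.eval t) ^ 2) := by gcongr
      _ = _ := by ring

/-- The Cauchy–Schwarz inequality against the constant function. -/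
lemma sq_integral_le_mul_integral_sq {f : ℝ → ℝ} {a b : ℝ} (hab : a ≤ b)
    (hf : ContinuousOn f (Icc a b)) :
    (∫ t in a..b, f t) ^ 2 ≤ (b - a) * ∫ t in a..b, (f t) ^ 2 := by
  rcases hab.eq_or_lt with rfl | hab
  · simp
  have hba : 0 < b - a := sub_pos.2 hab
  set I := ∫ t in a..b, f t
  set c := I / (b - a)
  have h0 : 0 ≤ ∫ t in a..b, (f t - c) ^ 2 := integral_nonneg hab.le fun _ _ ↦ sq_nonneg _
  have hi : IntervalIntegrable f volume a b := hf.intervalIntegrable_of_Icc hab.le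
  have hi2 : IntervalIntegrable (fun t ↦ f t ^ 2) volume a b :=
    (hf.pow 2).intervalIntegrable_of_Icc hab.le
  have h1 : ∫ t in a..b, (f t - c) ^ 2 =
      (∫ t in a..b, (f t) ^ 2) - 2 * c * I + (b - a) * c ^ 2 := by
    have : ∀ t, (f t - c) ^ 2 = f t ^ 2 - 2 * c * f t + c ^ 2 := fun t ↦ by ring
    simp only [this]
    rw [integral_add (hi2.sub (hi.const_mul _)) intervalIntegrable_const,
      integral_sub hi2 (hi.const_mul _), intervalIntegral.integral_const_mul,
      intervalIntegral.integral_const, smul_eq_mul]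
  have hc : c * (b - a) = I := div_mul_cancel₀ _ hba.ne'
  have h2 := mul_nonneg hba.le (h1 ▸ h0)
  have h3 : (b - a) * ((∫ t in a..b, (f t) ^ 2) - 2 * c * I + (b - a) * c ^ 2) =
      (b - a) * (∫ t in a..b, (f t) ^ 2) - I ^ 2 := by
    rw [← hc]
    ring
  linarith

/-- Friedrichs' inequality for a function vanishing at the left endpoint. -/
lemma integral_sq_le_of_hasDerivWithinAt {f f' : ℝ → ℝ} {a b : ℝ} (hab : a ≤ b)
    (hf : ∀ t ∈ Icc a b, HasDerivWithinAt f (f' t) (Icc a b) t)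
    (hf' : ContinuousOn f' (Icc a b)) (ha : f a = 0) :
    ∫ t in a..b, (f t) ^ 2 ≤ (b - a) ^ 2 * ∫ t in a..b, (f' t) ^ 2 := by
  have hcont : ContinuousOn f (Icc a b) := fun t ht ↦ (hf t ht).continuousWithinAt
  have hi2 : IntervalIntegrable (fun t ↦ f' t ^ 2) volume a b :=
    (hf'.pow 2).intervalIntegrable_of_Icc hab
  have hpt : ∀ t ∈ Icc a b, f t ^ 2 ≤ (b - a) * ∫ t in a..b, (f' t) ^ 2 := by
    intro t ht
    have hsub : Icc a t ⊆ Icc a b := Icc_subset_Icc_right ht.2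
    have hftc : ∫ y in a..t, f' y = f t := by
      rw [integral_eq_sub_of_hasDerivAt_of_le ht.1 (hcont.mono hsub) (fun x hx ↦
        (hf x (hsub (Ioo_subset_Icc_self hx))).hasDerivAt
          (Icc_mem_nhds hx.1 (hx.2.trans_le ht.2)))
        ((hf'.mono hsub).intervalIntegrable_of_Icc ht.1), ha, sub_zero]
    calc f t ^ 2 = (∫ y in a..t, f' y) ^ 2 := by rw [hftc]
      _ ≤ (t - a) * ∫ y in a..t, (f' y) ^ 2 :=
        sq_integral_le_mul_integral_sq ht.1 (hf'.mono hsub)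
      _ ≤ (b - a) * ∫ t in a..b, (f' t) ^ 2 := by
        refine mul_le_mul (by linarith [ht.2]) ?_
          (integral_nonneg ht.1 fun _ _ ↦ sq_nonneg _) (sub_nonneg.2 hab)
        exact integral_mono_interval le_rfl ht.1 ht.2
          (Filter.Eventually.of_forall fun _ ↦ sq_nonneg _) hi2
  calc ∫ t in a..b, (f t) ^ 2 ≤ ∫ _ in a..b, (b - a) * ∫ t in a..b, (f' t) ^ 2 :=
        integral_mono_on hab ((hcont.pow 2).intervalIntegrable_of_Icc hab)
          intervalIntegrable_const hpt
    _ = _ := by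
      rw [intervalIntegral.integral_const, smul_eq_mul]
      ring

/-- Iterated Friedrichs inequality for a function whose derivatives up to order `ℓ - 1` vanish at
the left endpoint. -/
lemma integral_iteratedDerivWithin_sq_le {g : ℝ → ℝ} {a b : ℝ} {ℓ : ℕ} (hab : a < b)
    (hg : ContDiffOn ℝ ℓ g (Icc a b))
    (ha : ∀ k < ℓ, iteratedDerivWithin k g (Icc a b) a = 0) {k : ℕ} (hk : k ≤ ℓ) :
    ∫ t in a..b, (iteratedDerivWithin k g (Icc a b) t) ^ 2 ≤
      (b - a) ^ (2 * (ℓ - k)) * ∫ t in a..b, (iteratedDerivWithin ℓ g (Icc a b) t) ^ 2 := by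
  have hu : UniqueDiffOn ℝ (Icc a b) := uniqueDiffOn_Icc hab
  induction hk using Nat.decreasingInduction with
  | self => simp
  | of_succ k hk ih =>
    have hstep := integral_sq_le_of_hasDerivWithinAt (f := iteratedDerivWithin k g (Icc a b))
      (f' := iteratedDerivWithin (k + 1) g (Icc a b)) hab.le
      (fun t ht ↦ by
        rw [iteratedDerivWithin_succ]
        exact (hg.differentiableOn_iteratedDerivWithin (mod_cast hk) hu t ht).hasDerivWithinAt)
      (hg.continuousOn_iteratedDerivWithin (mod_cast hk) hu) (ha k hk)
    refine hstep.trans ((mul_le_mul_of_nonneg_left ih (sq_nonneg _)).trans_eq ?_)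
    rw [← mul_assoc, ← pow_add]
    congr 2
    omega

lemma iteratedDerivWithin_polynomial_eval (p : ℝ[X]) {s : Set ℝ} (hs : UniqueDiffOn ℝ s) (k : ℕ)
    {t : ℝ} (ht : t ∈ s) :
    iteratedDerivWithin k (fun x ↦ p.eval x) s t = (derivative^[k] p).eval t := by
  induction k generalizing t with
  | zero => simp
  | succ k ih =>
    rw [iteratedDerivWithin_succ, derivWithin_congr (fun x hx ↦ ih hx) (ih ht),
      Polynomial.derivWithin _ (hs t ht), Function.iterate_succ_apply']

/-- A polynomial of degree less than `n` with prescribed derivatives at a point. -/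
lemma exists_polynomial_iterate_derivative_eval_eq (a : ℝ) (n : ℕ) (c : ℕ → ℝ) :
    ∃ T : ℝ[X], T.natDegree ≤ n - 1 ∧ derivative^[n] T = 0 ∧
      ∀ k < n, (derivative^[k] T).eval a = c k := by
  let P : ℝ[X] := ∑ k ∈ Finset.range n, monomial k (c k / k.factorial)
  have hP : P.natDegree ≤ n - 1 := natDegree_sum_le_of_forall_le _ _ fun k hk ↦
    (natDegree_monomial_le _).trans (Nat.le_sub_one_of_lt (Finset.mem_range.1 hk))
  refine ⟨taylor (-a) P, by rwa [natDegree_taylor], ?_, fun k hk ↦ ?_⟩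
  · rcases n.eq_zero_or_pos with rfl | hn
    · simp [P]
    · exact iterate_derivative_eq_zero (by rw [natDegree_taylor]; omega)
  · rw [← factorial_smul_hasseDeriv, LinearMap.smul_apply, eval_smul, ← taylor_coeff,
      taylor_taylor, add_neg_cancel, taylor_zero, nsmul_eq_mul]
    have : P.coeff k = c k / k.factorial := by simp [P, coeff_monomial, hk]
    rw [this]
    field_simp

/-- `L²` stability of an orthogonal projection. -/
lemma integral_sq_le_of_integral_sub_mul_eq_zero {g s : ℝ → ℝ} {a b : ℝ} (hab : a ≤ b)
    (hg : ContinuousOn g (Icc a b)) (hs : ContinuousOn s (Icc a b))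
    (h : ∫ t in a..b, (g t - s t) * s t = 0) :
    ∫ t in a..b, (s t) ^ 2 ≤ ∫ t in a..b, (g t) ^ 2 := by
  have hi1 : IntervalIntegrable (fun t ↦ (g t - s t) ^ 2) volume a b :=
    ((hg.sub hs).pow 2).intervalIntegrable_of_Icc hab
  have hi2 : IntervalIntegrable (fun t ↦ 2 * ((g t - s t) * s t)) volume a b :=
    (((hg.sub hs).mul hs).intervalIntegrable_of_Icc hab).const_mul 2
  have hi3 : IntervalIntegrable (fun t ↦ s t ^ 2) volume a b :=
    (hs.pow 2).intervalIntegrable_of_Icc hab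
  have hexp : ∫ t in a..b, (g t) ^ 2 =
      (∫ t in a..b, (g t - s t) ^ 2) + ∫ t in a..b, (s t) ^ 2 := by
    have : ∀ t, g t ^ 2 = (g t - s t) ^ 2 + 2 * ((g t - s t) * s t) + s t ^ 2 := fun t ↦ by ring
    simp only [this]
    rw [integral_add (hi1.add hi2) hi3, integral_add hi1 hi2,
      intervalIntegral.integral_const_mul, h]
    ring
  have : 0 ≤ ∫ t in a..b, (g t - s t) ^ 2 := integral_nonneg hab fun _ _ ↦ sq_nonneg _
  linarith

lemma integral_sub_sq_le {f g : ℝ → ℝ} {a b : ℝ} (hab : a ≤ b)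
    (hf : ContinuousOn f (Icc a b)) (hg : ContinuousOn g (Icc a b)) :
    ∫ t in a..b, (f t - g t) ^ 2 ≤
      2 * (∫ t in a..b, (f t) ^ 2) + 2 * ∫ t in a..b, (g t) ^ 2 := by
  have hif : IntervalIntegrable (fun t ↦ 2 * f t ^ 2) volume a b :=
    ((hf.pow 2).intervalIntegrable_of_Icc hab).const_mul 2
  have hig : IntervalIntegrable (fun t ↦ 2 * g t ^ 2) volume a b :=
    ((hg.pow 2).intervalIntegrable_of_Icc hab).const_mul 2
  rw [← intervalIntegral.integral_const_mul, ← intervalIntegral.integral_const_mul,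
    ← integral_add hif hig]
  exact integral_mono_on hab (((hf.sub hg).pow 2).intervalIntegrable_of_Icc hab) (hif.add hig)
    fun t _ ↦ by nlinarith [sq_nonneg (f t + g t)]

/-- One-dimensional Bramble–Hilbert-type approximation estimate for the
`L²(a,b)`-orthogonal projection onto polynomials of degree at most `r`:
`‖(ψ - q)^{(m)}‖_{L²(a,b)} ≤ C (b-a)^{ℓ-m} ‖ψ^{(ℓ)}‖_{L²(a,b)}` for `m ≤ ℓ ≤ r + 1`,
with `C` depending only on `r`, `ℓ`, `m`. -/
theorem proj_bramble_hilbert (r ℓ m : ℕ) (hmℓ : m ≤ ℓ) (hℓr : ℓ ≤ r + 1) :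
    ∃ C : ℝ, 0 < C ∧ ∀ a b : ℝ, a < b → ∀ ψ : ℝ → ℝ,
      ContDiffOn ℝ ℓ ψ (Set.Icc a b) →
      ∀ q : Polynomial ℝ, q.natDegree ≤ r →
        (∀ p : Polynomial ℝ, p.natDegree ≤ r →
          (∫ t in a..b, (ψ t - q.eval t) * p.eval t) = 0) →
        Real.sqrt (∫ t in a..b,
            (iteratedDerivWithin m (fun s => ψ s - q.eval s) (Set.Icc a b) t) ^ 2) ≤
          C * (b - a) ^ (ℓ - m) *
            Real.sqrt (∫ t in a..b, (iteratedDerivWithin ℓ ψ (Set.Icc a b) t) ^ 2) := by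
  obtain ⟨K, hK, hinv⟩ := exists_integral_iterate_derivative_sq_le r m
  refine ⟨√(2 + 2 * K), by positivity, fun a b hab ψ hψ q hq horth ↦ ?_⟩
  have hba : 0 < b - a := sub_pos.2 hab
  have hu : UniqueDiffOn ℝ (Icc a b) := uniqueDiffOn_Icc hab
  obtain ⟨T, hTdeg, hTℓ, hTa⟩ := exists_polynomial_iterate_derivative_eval_eq a ℓ
    fun k ↦ iteratedDerivWithin k ψ (Icc a b) a
  have hpoly : ∀ (p : ℝ[X]) (n : ℕ), ContDiffOn ℝ n (fun t ↦ p.eval t) (Icc a b) :=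
    fun p n ↦ by simpa using (p.contDiff_aeval (𝕜 := ℝ) n).contDiffOn (s := Icc a b)
  have hsub : ∀ (p : ℝ[X]) {f : ℝ → ℝ}, ContDiffOn ℝ ℓ f (Icc a b) → ∀ k ≤ ℓ, ∀ t ∈ Icc a b,
      iteratedDerivWithin k (fun x ↦ f x - p.eval x) (Icc a b) t =
        iteratedDerivWithin k f (Icc a b) t - (derivative^[k] p).eval t := by
    intro p f hf k hk t ht
    rw [← iteratedDerivWithin_polynomial_eval p hu k ht]
    exact iteratedDerivWithin_sub ht hu ((hf.of_le (mod_cast hk)) t ht) (hpoly p k t ht)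
  let g : ℝ → ℝ := fun t ↦ ψ t - T.eval t
  have hg : ContDiffOn ℝ ℓ g (Icc a b) := hψ.sub (hpoly T ℓ)
  let s : ℝ[X] := q - T
  have hs : s.natDegree ≤ r := (natDegree_sub_le _ _).trans (max_le hq (by omega))
  have hgs : ∀ t, g t - s.eval t = ψ t - q.eval t := fun t ↦ by simp [g, s]
  set J := ∫ t in a..b, (iteratedDerivWithin ℓ ψ (Icc a b) t) ^ 2
  have hgℓ : ∫ t in a..b, (iteratedDerivWithin ℓ g (Icc a b) t) ^ 2 = J := by
    refine integral_congr fun t ht ↦ ?_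
    rw [uIcc_of_le hab.le] at ht
    simp only [g, hsub T hψ ℓ le_rfl t ht, hTℓ, eval_zero, sub_zero]
  have hga : ∀ k < ℓ, iteratedDerivWithin k g (Icc a b) a = 0 := fun k hk ↦ by
    rw [hsub T hψ k hk.le a (left_mem_Icc.2 hab.le), hTa k hk, sub_self]
  have hgm := integral_iteratedDerivWithin_sq_le hab hg hga hmℓ
  have hg0 := integral_iteratedDerivWithin_sq_le hab hg hga (Nat.zero_le ℓ)
  rw [hgℓ] at hgm hg0
  simp only [iteratedDerivWithin_zero, Nat.sub_zero] at hg0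
  have hstab : ∫ t in a..b, (s.eval t) ^ 2 ≤ ∫ t in a..b, (g t) ^ 2 := by
    refine integral_sq_le_of_integral_sub_mul_eq_zero hab.le hg.continuousOn
      s.continuous.continuousOn ?_
    simpa only [hgs] using horth s hs
  have hsm : ∫ t in a..b, ((derivative^[m] s).eval t) ^ 2 ≤ K * ((b - a) ^ (2 * (ℓ - m)) * J) := by
    refine le_of_mul_le_mul_left ?_ (pow_pos hba (2 * m))
    calc _ ≤ K * ∫ t in a..b, (s.eval t) ^ 2 := hinv a b hab s hs
      _ ≤ K * ((b - a) ^ (2 * ℓ) * J) := by gcongr; exact hstab.trans hg0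
      _ = _ := by
        rw [show 2 * ℓ = 2 * m + 2 * (ℓ - m) by omega, pow_add]
        ring
  have hmain : ∫ t in a..b, (iteratedDerivWithin m (fun s => ψ s - q.eval s) (Icc a b) t) ^ 2 ≤
      (2 + 2 * K) * ((b - a) ^ (2 * (ℓ - m)) * J) := by
    have hcongr : ∫ t in a..b,
        (iteratedDerivWithin m (fun s => ψ s - q.eval s) (Icc a b) t) ^ 2 =
        ∫ t in a..b, (iteratedDerivWithin m g (Icc a b) t - (derivative^[m] s).eval t) ^ 2 := by
      refine integral_congr fun t ht ↦ ?_
      rw [uIcc_of_le hab.le] at ht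
      simp only [← hgs, hsub s hg m hmℓ t ht]
    rw [hcongr]
    have := integral_sub_sq_le hab.le
      (hg.continuousOn_iteratedDerivWithin (mod_cast hmℓ) hu)
      (derivative^[m] s).continuous.continuousOn
    linarith
  calc _ ≤ √((2 + 2 * K) * ((b - a) ^ (2 * (ℓ - m)) * J)) := Real.sqrt_le_sqrt hmain
    _ = _ := by
      rw [Real.sqrt_mul (by positivity), Real.sqrt_mul (by positivity), mul_comm 2 (ℓ - m), pow_mul,
        Real.sqrt_sq (by positivity), mul_assoc]
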